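/- Let 0 < α₂ < α₁ < 1, C₁ > 0, C₂ ≥ 0 with C₁ + C₂ = 1, and λ > 0. Define f_W(t) = (λ t^{α₁−1}/C₁) Σ_{k=0}^∞ (−C₂ t^{α₁−α₂}/C₁)^k E^{k+1}_{α₁, α₁+(α₁−α₂)k}(−λ t^{α₁}/C₁) for t > 0. Then for every s > 0 satisfying C₂ s^{α₂} < C₁ s^{α₁} + λ, the Laplace transform identity ∫₀^∞ e^{−st} f_W(t) dt = λ / (C₁ s^{α₁} + C₂ s^{α₂} + λ) holds. -/

import Mathlib

open MeasureTheory Filter Real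

noncomputable section

/-- Three-parameter Mittag-Leffler function `E^γ_{α,β}(z)`. -/
noncomputable def ml (α β γ z : ℝ) : ℝ :=
  ∑' k : ℕ, (∏ j ∈ Finset.range k, (γ + j)) / (Nat.factorial k) * z ^ k / Real.Gamma (k * α + β)

lemma choose_hasSum_aux {x y : ℝ} (hx : 0 ≤ x) (hy : 0 ≤ y) (h : x + y < 1) :
    Summable (fun p : ℕ × ℕ => ((p.1 + p.2).choose p.2 : ℝ) * (x ^ p.1 * y ^ p.2)) := by
  rw [← Finset.HasAntidiagonal.sigmaAntidiagonalEquivProd.summable_iff, summable_sigma_of_nonneg]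
  · refine ⟨fun n => (hasSum_fintype _).summable, ?_⟩
    refine (summable_geometric_of_lt_one (add_nonneg hx hy) h).congr fun n => ?_
    rw [tsum_fintype, (Commute.all x y).add_pow']
    simp only [Function.comp]
    rw [← Finset.sum_coe_sort]
    refine Finset.sum_congr rfl fun p _ => ?_
    have := Finset.HasAntidiagonal.mem_antidiagonal.1 p.2
    simp only [Finset.HasAntidiagonal.sigmaAntidiagonalEquivProd, Equiv.coe_fn_mk, nsmul_eq_mul, this]
    rw [Nat.choose_symm_of_eq_add this.symm]
  · intro p; simp only [Function.comp]; positivity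

lemma choose_hasSum {x y : ℝ} (h : |x| + |y| < 1) :
    HasSum (fun p : ℕ × ℕ => ((p.1 + p.2).choose p.2 : ℝ) * (x ^ p.1 * y ^ p.2)) (1 - (x + y))⁻¹ := by
  have hS : Summable (fun p : ℕ × ℕ => ((p.1 + p.2).choose p.2 : ℝ) * (x ^ p.1 * y ^ p.2)) := by
    apply Summable.of_norm
    refine (choose_hasSum_aux (abs_nonneg x) (abs_nonneg y) h).congr fun p => ?_
    rw [Real.norm_eq_abs, abs_mul, abs_mul, abs_pow, abs_pow, Nat.abs_cast]
  have hS2 := hS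
  rw [← Finset.HasAntidiagonal.sigmaAntidiagonalEquivProd.summable_iff] at hS2
  have h1 := hS2.hasSum.sigma (fun n => (hasSum_fintype _))
  have h2 := hasSum_geometric_of_abs_lt_one (lt_of_le_of_lt (abs_add_le x y) h)
  have h3 : ∀ n, (x + y) ^ n = ∑ c : Finset.HasAntidiagonal.antidiagonal n, ((fun p : ℕ × ℕ => ((p.1 + p.2).choose p.2 : ℝ) * (x ^ p.1 * y ^ p.2)) ∘ Finset.HasAntidiagonal.sigmaAntidiagonalEquivProd) ⟨n, c⟩ := by
    intro n
    rw [(Commute.all x y).add_pow']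
    simp only [Function.comp]
    rw [← Finset.sum_coe_sort]
    refine Finset.sum_congr rfl fun p _ => ?_
    have := Finset.HasAntidiagonal.mem_antidiagonal.1 p.2
    simp only [Finset.HasAntidiagonal.sigmaAntidiagonalEquivProd, Equiv.coe_fn_mk, nsmul_eq_mul, this]
    rw [Nat.choose_symm_of_eq_add this.symm]
  simp_rw [← h3] at h1
  simp only [Function.comp_def] at h1
  rw [Equiv.tsum_eq Finset.HasAntidiagonal.sigmaAntidiagonalEquivProd (fun p : ℕ × ℕ => ((p.1 + p.2).choose p.2 : ℝ) * (x ^ p.1 * y ^ p.2))] at h1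
  rw [← h1.unique h2]
  exact hS.hasSum

lemma int_gamma {p s : ℝ} (hp : 0 < p) (hs : 0 < s) :
    IntegrableOn (fun t : ℝ => t ^ (p - 1) * exp (-(s * t))) (Set.Ioi 0) ∧
      ∫ t in Set.Ioi (0:ℝ), t ^ (p - 1) * exp (-(s * t)) = s ^ (-p) * Gamma p := by
  have h := Real.integral_rpow_mul_exp_neg_mul_Ioi hp hs
  rw [one_div, Real.inv_rpow hs.le, ← Real.rpow_neg hs.le] at h
  refine ⟨?_, h⟩
  by_contra hc
  rw [IntegrableOn] at hc
  rw [integral_undef hc] at h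
  have := Real.Gamma_pos_of_pos hp
  have : 0 < s ^ (-p) * Gamma p := by positivity
  linarith

lemma tsum_integrable {X : Type*} [MeasurableSpace X] {μ : Measure X} {F : ℕ × ℕ → X → ℝ}
    (hF_int : ∀ i, Integrable (F i) μ) (hF_sum : Summable fun i ↦ ∫ a, ‖F i a‖ ∂μ) :
    (∀ᵐ a ∂μ, Summable (fun i => F i a)) ∧ Integrable (fun a => ∑' i, F i a) μ := by
  have e (i) : ∫⁻ a, ‖F i a‖ₑ ∂μ = ENNReal.ofReal (∫ a, ‖F i a‖ ∂μ) := by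
    rw [ofReal_integral_norm_eq_lintegral_enorm (hF_int i)]
  have h1 : ∫⁻ a, ∑' i, ‖F i a‖ₑ ∂μ ≠ ⊤ := by
    rw [lintegral_tsum (fun i => (hF_int i).1.enorm)]
    simp_rw [e]
    rw [← ENNReal.ofReal_tsum_of_nonneg (fun i => integral_nonneg fun a => norm_nonneg _) hF_sum]
    exact ENNReal.ofReal_ne_top
  have hm : AEMeasurable (fun a => ∑' i, ‖F i a‖ₑ) μ := AEMeasurable.tsum (fun i => (hF_int i).1.enorm)
  have hs : ∀ᵐ a ∂μ, Summable (fun i => F i a) := by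
    filter_upwards [ae_lt_top' hm h1] with a ha
    apply Summable.of_norm
    have := ENNReal.tsum_coe_ne_top_iff_summable.1 ha.ne
    exact NNReal.summable_coe.2 this
  refine ⟨hs, ?_, ?_⟩
  · exact aestronglyMeasurable_of_tendsto_ae (u := (atTop : Filter (Finset (ℕ × ℕ)))) (f := fun S a => ∑ i ∈ S, F i a)
      (fun S => Finset.aestronglyMeasurable_fun_sum S fun i _ => (hF_int i).1)
      (by filter_upwards [hs] with a ha using ha.hasSum)
  · refine lt_of_le_of_lt (lintegral_mono_ae ?_) (lt_top_iff_ne_top.2 h1)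
    filter_upwards with a
    exact enorm_tsum_le_tsum_enorm

lemma step1 {α₁ α₂ a b : ℝ} (hα₂ : 0 < α₂) (hα₂₁ : α₂ < α₁) (ha : 0 < a) (hb : 0 ≤ b)
    (f : ℝ → ℝ) (hf : ∀ t : ℝ, 0 < t → f t = a * t ^ (α₁ - 1) *
        ∑' k : ℕ, (-(b * t ^ (α₁ - α₂))) ^ k *
          ml α₁ (α₁ + (α₁ - α₂) * k) (k + 1) (-(a * t ^ α₁)))
    {s : ℝ} (hs : 0 < s) (hlt : b * s ^ (-(α₁ - α₂)) + a * s ^ (-α₁) < 1) :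
    IntegrableOn (fun t => exp (-(s * t)) * f t) (Set.Ioi 0) ∧
      ∫ t in Set.Ioi (0 : ℝ), exp (-(s * t)) * f t = a / (s ^ α₁ + b * s ^ α₂ + a) := by
  have hα₁ : 0 < α₁ := hα₂.trans hα₂₁
  set β := α₁ - α₂ with hβ
  have hβ0 : 0 < β := by linarith
  set e : ℕ × ℕ → ℝ := fun p => α₁ + β * p.1 + α₁ * p.2 with he
  have he0 : ∀ p, 0 < e p := fun p => by simp only [he]; positivity
  set c : ℕ × ℕ → ℝ := fun p => a * (((p.1 + p.2).choose p.2 : ℝ) * ((-b) ^ p.1 * (-a) ^ p.2)) / Gamma (e p) with hc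
  set F : ℕ × ℕ → ℝ → ℝ := fun p t => c p * (t ^ (e p - 1) * exp (-(s * t))) with hF
  have hint : ∀ p, Integrable (F p) (volume.restrict (Set.Ioi 0)) := fun p =>
    (int_gamma (he0 p) hs).1.const_mul (c p)
  have hspow : ∀ p, s ^ (-(e p)) = s ^ (-α₁) * ((s ^ (-β)) ^ p.1 * (s ^ (-α₁)) ^ p.2) := by
    intro p
    rw [← Real.rpow_natCast, ← Real.rpow_natCast, ← Real.rpow_mul hs.le, ← Real.rpow_mul hs.le,
      ← Real.rpow_add hs, ← Real.rpow_add hs]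
    congr 1
    simp only [he]; ring
  have hG : ∀ p, 0 < Gamma (e p) := fun p => Real.Gamma_pos_of_pos (he0 p)
  have hval : ∀ p, ∫ t in Set.Ioi (0:ℝ), F p t = (a * s ^ (-α₁)) *
      (((p.1 + p.2).choose p.2 : ℝ) * ((-(b * s ^ (-β))) ^ p.1 * (-(a * s ^ (-α₁))) ^ p.2)) := by
    intro p
    simp only [hF]
    rw [integral_const_mul, (int_gamma (he0 p) hs).2, hspow]
    have := (hG p).ne'
    simp only [hc]
    rw [neg_mul_eq_neg_mul, neg_mul_eq_neg_mul, mul_pow, mul_pow]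
    field_simp
  have hnorm : ∀ p, ∫ t in Set.Ioi (0:ℝ), ‖F p t‖ = (a * s ^ (-α₁)) *
      (((p.1 + p.2).choose p.2 : ℝ) * (((b * s ^ (-β))) ^ p.1 * ((a * s ^ (-α₁))) ^ p.2)) := by
    intro p
    have : ∀ t ∈ Set.Ioi (0:ℝ), ‖F p t‖ = |c p| * (t ^ (e p - 1) * exp (-(s * t))) := by
      intro t ht
      have ht : 0 < t := ht
      simp only [hF]
      rw [norm_mul, Real.norm_eq_abs, Real.norm_of_nonneg (by positivity)]
    rw [setIntegral_congr_fun measurableSet_Ioi this]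
    rw [integral_const_mul, (int_gamma (he0 p) hs).2, hspow]
    have := (hG p).ne'
    simp only [hc]
    rw [abs_div, abs_mul, abs_mul, abs_mul, abs_pow, abs_pow, abs_neg, abs_neg, abs_of_pos (hG p), abs_of_pos ha, abs_of_nonneg hb,
      Nat.abs_cast, mul_pow, mul_pow]
    field_simp
  have hx0 : 0 ≤ b * s ^ (-β) := by positivity
  have hy0 : 0 ≤ a * s ^ (-α₁) := by positivity
  have hsum : Summable fun p => ∫ t in Set.Ioi (0:ℝ), ‖F p t‖ := by
    simp_rw [hnorm]
    exact (choose_hasSum_aux hx0 hy0 hlt).mul_left _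
  obtain ⟨hae, hI⟩ := tsum_integrable hint hsum
  have hsI := hasSum_integral_of_summable_integral_norm hint hsum
  have hEq : (fun t => ∑' p, F p t) =ᵐ[volume.restrict (Set.Ioi 0)] fun t => exp (-(s * t)) * f t := by
    filter_upwards [hae, ae_restrict_mem measurableSet_Ioi] with t hts ht
    have ht : 0 < t := ht
    rw [hts.tsum_prod, hf t ht, ← mul_assoc, ← tsum_mul_left]
    refine tsum_congr fun k => ?_
    unfold ml
    rw [← mul_assoc, ← tsum_mul_left]
    refine tsum_congr fun j => ?_
    simp only [hF, hc, he]
    have h1 : (∏ i ∈ Finset.range j, ((k:ℝ) + 1 + i)) / (Nat.factorial j) = ((k + j).choose j : ℝ) := by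
      rw [div_eq_iff (by positivity)]
      have := Nat.ascFactorial_eq_factorial_mul_choose k j
      rw [Nat.ascFactorial_eq_prod_range] at this
      have := congrArg (Nat.cast : ℕ → ℝ) this
      push_cast at this
      rw [this]; ring
    rw [h1]
    have h2 : t ^ (α₁ + β * k + α₁ * j - 1) = t ^ (α₁ - 1) * ((t ^ β) ^ k * (t ^ α₁) ^ j) := by
      rw [← Real.rpow_natCast, ← Real.rpow_natCast, ← Real.rpow_mul ht.le, ← Real.rpow_mul ht.le,
        ← Real.rpow_add ht, ← Real.rpow_add ht]
      congr 1
      ring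
    rw [h2, neg_mul_eq_neg_mul b, neg_mul_eq_neg_mul a, mul_pow, mul_pow,
      show (j:ℝ) * α₁ + (α₁ + β * k) = α₁ + β * k + α₁ * j by ring]
    ring
  refine ⟨hI.congr hEq, ?_⟩
  rw [← integral_congr_ae hEq]
  simp_rw [hval] at hsI
  have h3 := (choose_hasSum (x := -(b * s ^ (-β))) (y := -(a * s ^ (-α₁))) (by
    rw [abs_neg, abs_neg, abs_of_nonneg hx0, abs_of_nonneg hy0]; exact hlt)).mul_left (a * s ^ (-α₁))
  rw [hsI.unique h3]
  have h4 : s ^ (-β) = s ^ α₂ * s ^ (-α₁) := by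
    rw [← Real.rpow_add hs]; congr 1; rw [hβ]; ring
  rw [h4, Real.rpow_neg hs.le]
  have : 0 < s ^ α₁ := by positivity
  have : 0 < s ^ α₂ := by positivity
  have : 0 < s ^ α₁ + b * s ^ α₂ + a := by positivity
  have : 1 - (-(b * (s ^ α₂ * (s ^ α₁)⁻¹)) + -(a * (s ^ α₁)⁻¹)) = (s ^ α₁ + b * s ^ α₂ + a) * (s ^ α₁)⁻¹ := by
    field_simp; ring
  rw [this]
  field_simp

/-- Completely monotone up to order `n` on `(0,∞)`. -/
def CMn : ℕ → (ℝ → ℝ) → Prop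
  | 0, h => ∀ s, 0 < s → 0 ≤ h s
  | n + 1, h => (∀ s, 0 < s → 0 ≤ h s) ∧ ∃ h' : ℝ → ℝ, (∀ s, 0 < s → HasDerivAt h (-(h' s)) s) ∧ CMn n h'

lemma CMn.nonneg {n : ℕ} {h : ℝ → ℝ} (H : CMn n h) : ∀ s, 0 < s → 0 ≤ h s := by
  cases n with
  | zero => exact H
  | succ n => exact H.1

lemma CMn.pred {n : ℕ} : ∀ {h : ℝ → ℝ}, CMn (n + 1) h → CMn n h := by
  induction n with
  | zero => intro h H; exact H.1
  | succ n ih =>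
    rintro h ⟨h0, h', hd, H⟩
    exact ⟨h0, h', hd, ih H⟩

lemma CMn.add {n : ℕ} : ∀ {h k : ℝ → ℝ}, CMn n h → CMn n k → CMn n (fun s => h s + k s) := by
  induction n with
  | zero => intro h k H K s hs; exact add_nonneg (H s hs) (K s hs)
  | succ n ih =>
    rintro h k ⟨h0, h', hd, H⟩ ⟨k0, k', kd, K⟩
    refine ⟨fun s hs => add_nonneg (h0 s hs) (k0 s hs), fun s => h' s + k' s, fun s hs => ?_, ih H K⟩
    refine HasDerivAt.congr_deriv (f := _) ((hd s hs).add (kd s hs)) ?_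
    ring

lemma CMn.mul {n : ℕ} : ∀ {h k : ℝ → ℝ}, CMn n h → CMn n k → CMn n (fun s => h s * k s) := by
  induction n with
  | zero => intro h k H K s hs; exact mul_nonneg (H s hs) (K s hs)
  | succ n ih =>
    intro h k H K
    have Hp := H.pred
    have Kp := K.pred
    obtain ⟨h0, h', hd, H⟩ := H
    obtain ⟨k0, k', kd, K⟩ := K
    refine ⟨fun s hs => mul_nonneg (h0 s hs) (k0 s hs), fun s => h' s * k s + h s * k' s,
      fun s hs => ?_, (ih H Kp).add (ih Hp K)⟩
    refine HasDerivAt.congr_deriv (f := _) ((hd s hs).mul (kd s hs)) ?_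
    ring

lemma CMn.rpow {n : ℕ} : ∀ {c p : ℝ}, 0 ≤ c → p ≤ 0 → CMn n (fun s => c * s ^ p) := by
  induction n with
  | zero => intro c p hc hp s hs; positivity
  | succ n ih =>
    intro c p hc hp
    refine ⟨fun s hs => by positivity, fun s => (c * (-p)) * s ^ (p - 1), fun s hs => ?_,
      ih (mul_nonneg hc (by linarith)) (by linarith)⟩
    refine HasDerivAt.congr_deriv (f := _) ((Real.hasDerivAt_rpow_const (p := p) (Or.inl hs.ne')).const_mul c) ?_
    ring

/-- difference operator -/
def dif (h : ℝ → ℝ) : ℝ → ℝ := fun s => h s - h (s + 1)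

lemma CMn.dif {n : ℕ} : ∀ {h : ℝ → ℝ}, CMn (n + 1) h → CMn n (dif h) := by
  have key : ∀ h h' : ℝ → ℝ, (∀ s, 0 < s → HasDerivAt h (-(h' s)) s) → (∀ s, 0 < s → 0 ≤ h' s) →
      ∀ s, 0 < s → 0 ≤ _root_.dif h s := by
    intro h h' hd h0 s hs
    have : AntitoneOn h (Set.Ioi 0) := by
      apply antitoneOn_of_deriv_nonpos (convex_Ioi 0)
      · intro x hx; exact (hd x hx).continuousAt.continuousWithinAt
      · intro x hx; rw [interior_Ioi] at hx; exact (hd x hx).differentiableAt.differentiableWithinAt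
      · intro x hx; rw [interior_Ioi] at hx; rw [(hd x hx).deriv]; linarith [h0 x hx]
    have := this (Set.mem_Ioi.2 hs) (Set.mem_Ioi.2 (by linarith : 0 < s + 1)) (by linarith)
    unfold _root_.dif; linarith
  induction n with
  | zero => rintro h ⟨h0, h', hd, H⟩; exact key h h' hd H
  | succ n ih =>
    rintro h ⟨h0, h', hd, H⟩
    refine ⟨key h h' hd H.nonneg, _root_.dif h', fun s hs => ?_, ih H⟩
    have h2 : HasDerivAt (fun x => h (x + 1)) (-(h' (s + 1))) s :=
      (hd (s + 1) (by linarith)).comp_add_const s 1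
    have := (hd s hs).sub h2
    refine HasDerivAt.congr_deriv (f := _) (this) ?_
    unfold _root_.dif; ring

lemma CMn.iter {m : ℕ} : ∀ {h : ℝ → ℝ}, (∀ n, CMn n h) → ∀ n, CMn n (_root_.dif^[m] h) := by
  induction m with
  | zero => intro h H; exact H
  | succ m ih =>
    intro h H
    rw [Function.iterate_succ_apply]
    exact ih (fun n => (H (n + 1)).dif)

/-- The target Laplace transform. -/
def gg (α₁ α₂ a b : ℝ) : ℝ → ℝ := fun s => a / (s ^ α₁ + b * s ^ α₂ + a)

lemma gg_cm {α₁ α₂ a b : ℝ} (h1 : 0 < α₁) (h1' : α₁ < 1) (h2 : 0 < α₂) (h2' : α₂ < 1) (ha : 0 < a)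
    (hb : 0 ≤ b) (n : ℕ) : CMn n (gg α₁ α₂ a b) := by
  have pos : ∀ s : ℝ, 0 < s → 0 ≤ gg α₁ α₂ a b s := fun s hs => by unfold gg; positivity
  induction n with
  | zero => exact pos
  | succ n ih =>
    refine ⟨pos, _, fun s hs => ?_, (ih.mul ih).mul ((CMn.rpow (n := n) (c := α₁ / a) (p := α₁ - 1) (by positivity)
      (by linarith)).add (CMn.rpow (n := n) (c := b * α₂ / a) (p := α₂ - 1) (by positivity) (by linarith)))⟩
    have hd : s ^ α₁ + b * s ^ α₂ + a ≠ 0 := by positivity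
    have := (((Real.hasDerivAt_rpow_const (p := α₁) (Or.inl hs.ne')).add
      ((Real.hasDerivAt_rpow_const (p := α₂) (Or.inl hs.ne')).const_mul b)).add_const a)
    have := (hasDerivAt_const s a).div this hd
    refine HasDerivAt.congr_deriv (f := _) (this) ?_
    unfold gg
    simp only [Pi.add_apply]
    field_simp
    ring

open scoped unitInterval in
lemma pos_cont {G : ℝ → ℝ} (hG : IntegrableOn G (Set.Ioi 0))
    (h : ∀ k m : ℕ, 0 ≤ ∫ t in Set.Ioi (0:ℝ), exp (-t) ^ k * (1 - exp (-t)) ^ m * G t)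
    (φ : C(I, ℝ)) (hφ : ∀ x, 0 ≤ φ x) :
    0 ≤ ∫ t in Set.Ioi (0:ℝ), φ (Set.projIcc 0 1 zero_le_one (exp (-t))) * G t := by
  have hc : Continuous (fun t : ℝ => Set.projIcc (0:ℝ) 1 zero_le_one (exp (-t))) :=
    continuous_projIcc.comp (by fun_prop)
  have hB := bernsteinApproximation_uniform φ
  have hmeas : ∀ ψ : C(I, ℝ), AEStronglyMeasurable
      (fun t : ℝ => ψ (Set.projIcc 0 1 zero_le_one (exp (-t)))) (volume.restrict (Set.Ioi 0)) := fun ψ =>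
    (ψ.continuous.comp hc).aestronglyMeasurable
  have hint : ∀ ψ : C(I, ℝ), Integrable
      (fun t : ℝ => ψ (Set.projIcc 0 1 zero_le_one (exp (-t))) * G t) (volume.restrict (Set.Ioi 0)) := fun ψ =>
    Integrable.bdd_mul (c := ‖ψ‖) hG (hmeas ψ) (Eventually.of_forall fun t => ψ.norm_coe_le_norm _)
  have hT : Tendsto (fun n => ∫ t in Set.Ioi (0:ℝ), bernsteinApproximation n φ (Set.projIcc 0 1 zero_le_one (exp (-t))) * G t)
      atTop (nhds (∫ t in Set.Ioi (0:ℝ), φ (Set.projIcc 0 1 zero_le_one (exp (-t))) * G t)) := by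
    refine tendsto_integral_filter_of_dominated_convergence (fun t => (‖φ‖ + 1) * ‖G t‖)
      (Eventually.of_forall fun n => (hint _).1) ?_ (hG.norm.const_mul _) (Eventually.of_forall fun t => ?_)
    · filter_upwards [hB.norm.eventually_le_const (show ‖φ‖ < ‖φ‖ + 1 by linarith)] with n hn
      refine Eventually.of_forall fun t => ?_
      rw [norm_mul]
      exact mul_le_mul_of_nonneg_right ((ContinuousMap.norm_coe_le_norm _ _).trans hn) (norm_nonneg _)
    · exact (((continuous_eval_const (F := C(I, ℝ)) (Set.projIcc (0:ℝ) 1 zero_le_one (exp (-t)))).tendsto φ).comp hB).mul_const _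
  refine ge_of_tendsto' hT fun n => ?_
  simp only [bernsteinApproximation.apply, Finset.sum_mul, smul_eq_mul]
  have e : ∀ (k : Fin (n+1)), ∀ t ∈ Set.Ioi (0:ℝ), bernstein n k (Set.projIcc 0 1 zero_le_one (exp (-t))) * φ (bernstein.z k) * G t
     = ((n.choose k) * φ (bernstein.z k)) * (exp (-t) ^ (k:ℕ) * (1 - exp (-t)) ^ (n - k) * G t) := by
    intro k t ht
    rw [bernstein_apply, Set.projIcc_of_mem zero_le_one (x := exp (-t)) ⟨(exp_pos _).le, exp_le_one_iff.2 (by have : 0 < t := ht; linarith)⟩]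
    ring
  rw [integral_finsetSum]
  · refine Finset.sum_nonneg fun k _ => ?_
    rw [setIntegral_congr_fun measurableSet_Ioi (e k), integral_const_mul]
    exact mul_nonneg (mul_nonneg (by positivity) (hφ _)) (h _ _)
  · intro k _
    have := (hint (bernstein n k)).mul_const (φ (bernstein.z k))
    refine this.congr (Eventually.of_forall fun t => ?_)
    ring

open scoped unitInterval in
lemma pos_ae {G : ℝ → ℝ} (hG : IntegrableOn G (Set.Ioi 0))
    (h : ∀ k m : ℕ, 0 ≤ ∫ t in Set.Ioi (0:ℝ), exp (-t) ^ k * (1 - exp (-t)) ^ m * G t) :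
    ∀ᵐ t ∂(volume.restrict (Set.Ioi 0)), 0 ≤ G t := by
  -- compact sets
  have hK : ∀ K : Set ℝ, IsCompact K → K.Nonempty → K ⊆ Set.Ioi 0 → 0 ≤ ∫ t in K, G t := by
    intro K hK hne hsub
    set K' := Set.image (fun t : ℝ => exp (-t)) K with hK'
    have hK'c : IsCompact K' := hK.image (by fun_prop)
    have hK'ne : K'.Nonempty := hne.image _
    have hmem : ∀ t, exp (-t) ∈ K' ↔ t ∈ K := by
      intro t
      rw [hK']
      exact Function.Injective.mem_set_image (fun x y hxy => by simpa using hxy)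
    let φ : ℕ → C(I, ℝ) := fun n => ⟨fun x => exp (-(Metric.infDist (x:ℝ) K')) ^ n,
      ((Real.continuous_exp.comp ((Metric.continuous_infDist_pt K').comp continuous_subtype_val).neg)).pow n⟩
    have h0 : ∀ n, 0 ≤ ∫ t in Set.Ioi (0:ℝ), φ n (Set.projIcc 0 1 zero_le_one (exp (-t))) * G t :=
      fun n => pos_cont hG h (φ n) (fun x => by simp only [φ, ContinuousMap.coe_mk]; positivity)
    have hc : Continuous (fun t : ℝ => Set.projIcc (0:ℝ) 1 zero_le_one (exp (-t))) :=
      continuous_projIcc.comp (by fun_prop)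
    have hT : Tendsto (fun n => ∫ t in Set.Ioi (0:ℝ), φ n (Set.projIcc 0 1 zero_le_one (exp (-t))) * G t) atTop
        (nhds (∫ t in Set.Ioi (0:ℝ), K.indicator G t)) := by
      refine tendsto_integral_filter_of_dominated_convergence (fun t => ‖G t‖)
        (Eventually.of_forall fun n => ?_) (Eventually.of_forall fun n => Eventually.of_forall fun t => ?_) hG.norm ?_
      · exact (((φ n).continuous.comp hc).aestronglyMeasurable).mul hG.1
      · rw [norm_mul]
        apply mul_le_of_le_one_left (norm_nonneg _)
        simp only [φ, ContinuousMap.coe_mk]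
        rw [Real.norm_of_nonneg (by positivity)]
        exact pow_le_one₀ (exp_pos _).le (exp_le_one_iff.2 (by linarith [Metric.infDist_nonneg (s := K') (x := ((Set.projIcc (0:ℝ) 1 zero_le_one (exp (-t)) : I) : ℝ))]))
      · filter_upwards [ae_restrict_mem measurableSet_Ioi] with t ht
        have ht : 0 < t := ht
        simp only [φ, ContinuousMap.coe_mk]
        rw [Set.projIcc_of_mem zero_le_one (x := exp (-t)) ⟨(exp_pos _).le, exp_le_one_iff.2 (by linarith)⟩]
        by_cases htK : t ∈ K
        · rw [Set.indicator_of_mem htK]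
          have : Metric.infDist (exp (-t)) K' = 0 := Metric.infDist_zero_of_mem ((hmem t).2 htK)
          simp [this]
        · rw [Set.indicator_of_notMem htK]
          have h1 : 0 < Metric.infDist (exp (-t)) K' :=
            (hK'c.isClosed.notMem_iff_infDist_pos hK'ne).1 (fun hh => htK ((hmem t).1 hh))
          have := (tendsto_pow_atTop_nhds_zero_of_lt_one (exp_pos (-(Metric.infDist (exp (-t)) K'))).le
            (by rw [← Real.exp_zero]; exact Real.exp_lt_exp.2 (by linarith))).mul_const (G t)
          simpa using this
    have := ge_of_tendsto' hT h0
    rw [integral_indicator hK.measurableSet, Measure.restrict_restrict hK.measurableSet,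
      Set.inter_eq_left.2 hsub] at this
    exact this
  -- representative
  obtain ⟨g, hgm, hgG⟩ := hG.1
  have hgM : Measurable g := hgm.measurable
  suffices hN : volume (Set.Ioi 0 ∩ {t | g t < 0}) = 0 by
    have : ∀ᵐ t ∂(volume.restrict (Set.Ioi (0:ℝ))), 0 ≤ g t := by
      rw [ae_restrict_iff' measurableSet_Ioi, ae_iff]
      refine measure_mono_null (fun t ht => ?_) hN
      simp only [Set.mem_ofPred_eq, not_forall, not_le] at ht
      obtain ⟨h1, h2⟩ := ht
      exact ⟨h1, h2⟩
    filter_upwards [this, hgG] with t h1 h2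
    rw [h2]; exact h1
  by_contra hN
  have hNm : MeasurableSet (Set.Ioi 0 ∩ {t | g t < 0}) := measurableSet_Ioi.inter (hgM measurableSet_Iio)
  obtain ⟨K, hKs, hKc, hKpos⟩ := hNm.exists_lt_isCompact (pos_iff_ne_zero.2 hN)
  have hne : K.Nonempty := by
    by_contra hh
    rw [Set.not_nonempty_iff_eq_empty] at hh
    simp [hh] at hKpos
  have hs1 : K ⊆ Set.Ioi 0 := fun t ht => (hKs ht).1
  have h1 := hK K hKc hne hs1
  have hae : g =ᵐ[volume.restrict K] G := by
    filter_upwards [ae_restrict_of_ae_restrict_of_subset hs1 hgG] with t ht using ht.symm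
  have hgi : IntegrableOn g K := (hG.mono_set hs1).congr hae.symm
  rw [← integral_congr_ae hae] at h1
  have h2 : 0 < ∫ t in K, -(g t) := by
    rw [setIntegral_pos_iff_support_of_nonneg_ae]
    · have : Function.support (fun t => -(g t)) ∩ K = K := by
        refine Set.inter_eq_right.2 fun t ht => ?_
        have : g t < 0 := (hKs ht).2
        simp only [Function.mem_support]; linarith
      rw [this]; exact hKpos
    · filter_upwards [ae_restrict_mem hKc.measurableSet] with t ht
      have : g t < 0 := (hKs ht).2
      simp only [Pi.zero_apply]; linarith
    · exact hgi.neg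
  rw [integral_neg] at h2
  linarith

lemma transform {f g : ℝ → ℝ} {σ : ℝ}
    (H : ∀ s, σ < s → IntegrableOn (fun t => exp (-(s * t)) * f t) (Set.Ioi 0) ∧
      ∫ t in Set.Ioi (0:ℝ), exp (-(s * t)) * f t = g s) (m : ℕ) :
    ∀ s, σ < s → IntegrableOn (fun t => exp (-(s * t)) * (1 - exp (-t)) ^ m * f t) (Set.Ioi 0) ∧
      ∫ t in Set.Ioi (0:ℝ), exp (-(s * t)) * (1 - exp (-t)) ^ m * f t = dif^[m] g s := by
  induction m with
  | zero => simpa using H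
  | succ m ih =>
    intro s hs
    obtain ⟨i1, e1⟩ := ih s hs
    obtain ⟨i2, e2⟩ := ih (s + 1) (by linarith)
    have e : (fun t => exp (-(s * t)) * (1 - exp (-t)) ^ (m + 1) * f t) =
        fun t => exp (-(s * t)) * (1 - exp (-t)) ^ m * f t - exp (-((s + 1) * t)) * (1 - exp (-t)) ^ m * f t := by
      funext t
      rw [show -((s + 1) * t) = -(s * t) + -t by ring, exp_add, pow_succ]
      ring
    rw [e]
    refine ⟨i1.sub i2, ?_⟩
    rw [integral_sub i1 i2, e1, e2, Function.iterate_succ_apply']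
    rfl

lemma pos_f {f g : ℝ → ℝ} {σ : ℝ} (hσ : 0 ≤ σ) (hg : ∀ n, CMn n g)
    (H : ∀ s, σ < s → IntegrableOn (fun t => exp (-(s * t)) * f t) (Set.Ioi 0) ∧
      ∫ t in Set.Ioi (0:ℝ), exp (-(s * t)) * f t = g s) :
    ∀ᵐ t ∂(volume.restrict (Set.Ioi 0)), 0 ≤ f t := by
  have := pos_ae (H (σ + 1) (by linarith)).1 (fun k m => by
    have h1 := (transform H m (σ + 1 + k) (by have : (0:ℝ) ≤ k := by positivity
                                              linarith)).2
    have h2 : 0 ≤ dif^[m] g (σ + 1 + k) := (CMn.iter (m := m) hg 0) _ (by positivity)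
    rw [← h1] at h2
    refine h2.trans_eq (integral_congr_ae (Eventually.of_forall fun t => ?_))
    simp only
    rw [show -((σ + 1 + k) * t) = -((σ + 1) * t) + k * (-t) by ring, exp_add, exp_nat_mul]
    ring)
  filter_upwards [this] with t ht
  exact nonneg_of_mul_nonneg_right ht (exp_pos _)

lemma descend {f g : ℝ → ℝ} {σ : ℝ} (hg : ∀ n, CMn n g)
    (hf : ∀ᵐ t ∂(volume.restrict (Set.Ioi (0:ℝ))), 0 ≤ f t)
    (hfm : AEStronglyMeasurable f (volume.restrict (Set.Ioi (0:ℝ))))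
    (H : ∀ s, σ < s → IntegrableOn (fun t => exp (-(s * t)) * f t) (Set.Ioi 0) ∧
      ∫ t in Set.Ioi (0:ℝ), exp (-(s * t)) * f t = g s) {s : ℝ} (hs : 0 < s) (hs' : σ < s + 1) :
    IntegrableOn (fun t => exp (-(s * t)) * f t) (Set.Ioi 0) := by
  set h : ℕ → ℝ → ℝ := fun N t => exp (-(s * t)) * (1 - (1 - exp (-t)) ^ N) * f t with hh
  have e : ∀ N, h N = fun t => ∑ m ∈ Finset.range N, exp (-((s + 1) * t)) * (1 - exp (-t)) ^ m * f t := by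
    intro N; funext t
    have := geom_sum_mul_neg (1 - exp (-t)) N
    simp only [hh]
    rw [← this, show -((s + 1) * t) = -(s * t) + -t by ring, exp_add, ← Finset.sum_mul, ← Finset.mul_sum]
    ring
  have hi : ∀ N, IntegrableOn (h N) (Set.Ioi 0) := by
    intro N; rw [e]
    exact integrable_finsetSum _ fun m _ => (transform H m _ hs').1
  have hsum : ∀ N, ∑ m ∈ Finset.range N, dif^[m] g (s + 1) = g s - dif^[N] g s := by
    intro N
    induction N with
    | zero => simp
    | succ N ih =>
      rw [Finset.sum_range_succ, ih, Function.iterate_succ_apply']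
      simp only [dif]; ring
  have hv : ∀ N, ∫ t in Set.Ioi (0:ℝ), h N t ≤ g s := by
    intro N
    rw [e, integral_finsetSum _ (fun m _ => (transform H m _ hs').1),
      Finset.sum_congr rfl (fun m _ => (transform H m _ hs').2), hsum]
    linarith [(CMn.iter (m := N) hg 0) s hs]
  have hnn : ∀ N, 0 ≤ᵐ[volume.restrict (Set.Ioi (0:ℝ))] h N := by
    intro N
    filter_upwards [hf, ae_restrict_mem measurableSet_Ioi] with t h1 h2
    have h2 : 0 < t := h2
    have h3 : exp (-t) ≤ 1 := exp_le_one_iff.2 (by linarith)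
    have h4 : (1 - exp (-t)) ^ N ≤ 1 := pow_le_one₀ (by linarith) (by linarith [exp_pos (-t)])
    exact mul_nonneg (mul_nonneg (exp_pos _).le (by linarith)) h1
  have hm : AEStronglyMeasurable (fun t => exp (-(s * t)) * f t) (volume.restrict (Set.Ioi (0:ℝ))) :=
    (by fun_prop : Continuous fun t : ℝ => exp (-(s * t))).aestronglyMeasurable.mul hfm
  have hnnF : 0 ≤ᵐ[volume.restrict (Set.Ioi (0:ℝ))] fun t => exp (-(s * t)) * f t := by
    filter_upwards [hf] with t h1
    exact mul_nonneg (exp_pos _).le h1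
  refine ⟨hm, ?_⟩
  rw [hasFiniteIntegral_iff_ofReal hnnF]
  have hlim : ∀ᵐ t ∂(volume.restrict (Set.Ioi (0:ℝ))),
      ENNReal.ofReal (exp (-(s * t)) * f t) = liminf (fun N => ENNReal.ofReal (h N t)) atTop := by
    filter_upwards [ae_restrict_mem measurableSet_Ioi] with t h2
    have h2 : 0 < t := h2
    have h3 : exp (-t) ≤ 1 := exp_le_one_iff.2 (by linarith)
    have h4 := tendsto_pow_atTop_nhds_zero_of_lt_one (r := 1 - exp (-t)) (by linarith) (by linarith [exp_pos (-t)])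
    have h5 : Tendsto (fun N => h N t) atTop (nhds (exp (-(s * t)) * f t)) := by
      have := ((h4.const_sub 1).const_mul (exp (-(s * t)))).mul_const (f t)
      simpa using this
    exact (ENNReal.tendsto_ofReal h5).liminf_eq.symm
  rw [lintegral_congr_ae hlim]
  refine lt_of_le_of_lt (lintegral_liminf_le' fun N => (hi N).1.aemeasurable.ennreal_ofReal) ?_
  refine lt_of_le_of_lt (liminf_le_of_le (by isBoundedDefault) (a := ENNReal.ofReal (g s)) ?_) (ENNReal.ofReal_lt_top)
  intro b hb
  obtain ⟨N, hN⟩ := hb.exists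
  refine hN.trans ?_
  rw [← ofReal_integral_eq_lintegral_ofReal (hi N) (hnn N)]
  exact ENNReal.ofReal_le_ofReal (hv N)

lemma identity {f g : ℝ → ℝ} {σ τ : ℝ} (hg : AnalyticOnNhd ℝ g (Set.Ioi τ))
    (hf : ∀ᵐ t ∂(volume.restrict (Set.Ioi (0:ℝ))), 0 ≤ f t)
    (hfm : AEStronglyMeasurable f (volume.restrict (Set.Ioi (0:ℝ))))
    (H : ∀ s, σ < s → ∫ t in Set.Ioi (0:ℝ), exp (-(s * t)) * f t = g s)
    (hI : ∀ s, τ < s → IntegrableOn (fun t => exp (-(s * t)) * f t) (Set.Ioi 0)) :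
    ∀ s, τ < s → ∫ t in Set.Ioi (0:ℝ), exp (-(s * t)) * f t = g s := by
  set μ : Measure ℝ := (volume.restrict (Set.Ioi (0:ℝ))).withDensity (fun t => ENNReal.ofReal (f t)) with hμ
  have hmd : AEMeasurable (fun t => ENNReal.ofReal (f t)) (volume.restrict (Set.Ioi (0:ℝ))) :=
    hfm.aemeasurable.ennreal_ofReal
  have hsub : Set.Ioi τ ⊆ ProbabilityTheory.integrableExpSet (fun t : ℝ => -t) μ := by
    intro s hs
    simp only [ProbabilityTheory.integrableExpSet]
    show Integrable _ μ
    rw [hμ, integrable_withDensity_iff_integrable_smul₀' hmd (Eventually.of_forall fun t => ENNReal.ofReal_lt_top)]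
    refine (hI s hs).congr ?_
    filter_upwards [hf] with t ht
    rw [ENNReal.toReal_ofReal ht, smul_eq_mul, mul_comm]
    congr 2; ring
  have hmgf : ∀ s, ProbabilityTheory.mgf (fun t : ℝ => -t) μ s = ∫ t in Set.Ioi (0:ℝ), exp (-(s * t)) * f t := by
    intro s
    rw [ProbabilityTheory.mgf, hμ, integral_withDensity_eq_integral_toReal_smul₀ hmd
      (Eventually.of_forall fun t => ENNReal.ofReal_lt_top)]
    refine integral_congr_ae ?_
    filter_upwards [hf] with t ht
    rw [ENNReal.toReal_ofReal ht, smul_eq_mul, mul_comm]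
    congr 2; ring
  have han : AnalyticOnNhd ℝ (ProbabilityTheory.mgf (fun t : ℝ => -t) μ) (Set.Ioi τ) :=
    ProbabilityTheory.analyticOnNhd_mgf.mono (interior_maximal hsub isOpen_Ioi)
  intro s hs
  rw [← hmgf]
  have hz : τ < max σ τ + 1 := by have := le_max_right σ τ; linarith
  refine han.eqOn_of_preconnected_of_eventuallyEq hg isPreconnected_Ioi (z₀ := max σ τ + 1) hz ?_ hs
  have : Set.Ioi σ ∈ nhds (max σ τ + 1) := Ioi_mem_nhds (by have := le_max_left σ τ; linarith)
  filter_upwards [this] with x hx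
  rw [hmgf, H x hx]

lemma extend_all {f g : ℝ → ℝ} {σ : ℝ} (hσ : 0 ≤ σ) (hg : ∀ n, CMn n g)
    (hga : AnalyticOnNhd ℝ g (Set.Ioi 0))
    (H : ∀ s, σ < s → IntegrableOn (fun t => exp (-(s * t)) * f t) (Set.Ioi 0) ∧
      ∫ t in Set.Ioi (0:ℝ), exp (-(s * t)) * f t = g s) :
    ∀ s, 0 < s → ∫ t in Set.Ioi (0:ℝ), exp (-(s * t)) * f t = g s := by
  have hf := pos_f hσ hg H
  have hfm : AEStronglyMeasurable f (volume.restrict (Set.Ioi (0:ℝ))) := by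
    have h1 := (H (σ + 1) (by linarith)).1.1
    have h2 := (by fun_prop : Continuous fun t : ℝ => exp ((σ + 1) * t)).aestronglyMeasurable
      (μ := volume.restrict (Set.Ioi (0:ℝ))) |>.mul h1
    refine h2.congr (Eventually.of_forall fun t => ?_)
    simp only [Pi.mul_apply]
    rw [← mul_assoc, ← exp_add]
    simp
  have key : ∀ n : ℕ, ∀ s, max 0 (σ - n) < s → IntegrableOn (fun t => exp (-(s * t)) * f t) (Set.Ioi 0) ∧
      ∫ t in Set.Ioi (0:ℝ), exp (-(s * t)) * f t = g s := by
    intro n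
    induction n with
    | zero => intro s hs; exact H s (by simpa using (max_lt_iff.1 hs).2)
    | succ n ih =>
      have hI : ∀ s, max 0 (σ - (n + 1 : ℕ)) < s → IntegrableOn (fun t => exp (-(s * t)) * f t) (Set.Ioi 0) := by
        intro s hs
        obtain ⟨h1, h2⟩ := max_lt_iff.1 hs
        push_cast at h2
        exact descend hg hf hfm ih h1 (max_lt (by linarith) (by linarith))
      have := identity (hga.mono (Set.Ioi_subset_Ioi (le_max_left 0 _))) hf hfm (fun s hs => (H s hs).2) hI
      exact fun s hs => ⟨hI s hs, this s hs⟩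
  intro s hs
  obtain ⟨n, hn⟩ := exists_nat_gt σ
  exact (key n s (max_lt hs (by linarith))).2

/-- The Laplace transform of the interarrival time density of the MFPP:
`∫₀^∞ e^{−st} f_W(t) dt = λ / (C₁ s^{α₁} + C₂ s^{α₂} + λ)`. -/
theorem mfpp_interarrival_laplace_transform
    (α₁ α₂ C₁ C₂ lam : ℝ)
    (hα₂ : 0 < α₂) (hα₂₁ : α₂ < α₁) (hα₁ : α₁ < 1)
    (hC₁ : 0 < C₁) (hC₂ : 0 ≤ C₂) (hC : C₁ + C₂ = 1) (hlam : 0 < lam)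
    (f_W : ℝ → ℝ)
    (hf : ∀ t : ℝ, 0 < t →
      f_W t = lam * t ^ (α₁ - 1) / C₁ *
        ∑' k : ℕ, (-(C₂ * t ^ (α₁ - α₂) / C₁)) ^ k *
          ml α₁ (α₁ + (α₁ - α₂) * k) (k + 1) (-(lam * t ^ α₁ / C₁)))
    (s : ℝ) (hs : 0 < s) (hdom : C₂ * s ^ α₂ < C₁ * s ^ α₁ + lam) :
    ∫ t in Set.Ioi (0 : ℝ), Real.exp (-(s * t)) * f_W t =
      lam / (C₁ * s ^ α₁ + C₂ * s ^ α₂ + lam) := by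
  have h1 : 0 < α₁ := hα₂.trans hα₂₁
  have ha : 0 < lam / C₁ := by positivity
  have hb : 0 ≤ C₂ / C₁ := by positivity
  have hf' : ∀ t : ℝ, 0 < t → f_W t = lam / C₁ * t ^ (α₁ - 1) *
        ∑' k : ℕ, (-(C₂ / C₁ * t ^ (α₁ - α₂))) ^ k *
          ml α₁ (α₁ + (α₁ - α₂) * k) (k + 1) (-(lam / C₁ * t ^ α₁)) := by
    intro t ht
    rw [hf t ht, mul_div_right_comm lam, mul_div_right_comm C₂, mul_div_right_comm lam]
  have hT : Tendsto (fun s : ℝ => C₂ / C₁ * s ^ (-(α₁ - α₂)) + lam / C₁ * s ^ (-α₁)) atTop (nhds 0) := by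
    have := ((tendsto_rpow_neg_atTop (show 0 < α₁ - α₂ by linarith)).const_mul (C₂ / C₁)).add
      ((tendsto_rpow_neg_atTop h1).const_mul (lam / C₁))
    simpa using this
  obtain ⟨σ, hσ⟩ := eventually_atTop.1 (hT.eventually_lt_const one_pos)
  have hga : AnalyticOnNhd ℝ (gg α₁ α₂ (lam / C₁) (C₂ / C₁)) (Set.Ioi 0) := by
    intro x hx
    have hx : 0 < x := hx
    have hr : ∀ p : ℝ, AnalyticAt ℝ (fun y : ℝ => y ^ p) x := fun p =>
      ((analyticAt_log hx).mul analyticAt_const).rexp.congr (by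
        filter_upwards [Ioi_mem_nhds hx] with y hy
        exact (Real.rpow_def_of_pos hy p).symm)
    exact analyticAt_const.div (((hr α₁).add (analyticAt_const.mul (hr α₂))).add analyticAt_const)
      (by positivity)
  have := extend_all (f := f_W) (le_max_left 0 σ) (gg_cm h1 hα₁ hα₂ (hα₂₁.trans hα₁) ha hb) hga
    (fun s hs => by
      obtain ⟨h2, h3⟩ := max_lt_iff.1 hs
      exact step1 hα₂ hα₂₁ ha hb f_W hf' h2 (hσ s h3.le)) s hs
  rw [this, gg]
  have : 0 < C₁ * s ^ α₁ + C₂ * s ^ α₂ + lam := by positivity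
  have : 0 < s ^ α₁ + C₂ / C₁ * s ^ α₂ + lam / C₁ := by positivity
  rw [div_eq_div_iff (by positivity) (by positivity)]
  field_simp

end
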